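/- arXiv:1709.09117 — 2 statements merged into one kernel-verified Lean document; each statement's English description precedes it below -/
import Mathlib

section
/- (Proposition 1(ii), part 2.) If q ∈ Δ and y ∈ (0,∞)^N satisfies H(y) = q, then the convex conjugate of the surplus function satisfies W*(q) = Σ_{i=1}^N q_i log y_i. (With S denoting the inverse of H, this says W*(q) = q · log S(q), the negative generalized entropy.) -/
/-!
Write `v₀ = log y` and `F = exp ∘ W`. Since `∑ i, q i = 1`, `fderiv ℝ F v₀` is not zero,
so `F` is genuinely differentiable at `v₀`. The identity `W (v + t • 1) = W v + t` shows that
the derivative of `F` at `v₀` in the direction `1` is `F v₀`; it is also `∑ i, q i = 1`, so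
`F v₀ = 1`, i.e. `W v₀ = 0`. Consequently `W = log ∘ F` has gradient `q` at `v₀`, and, `W` being
convex, the tangent inequality `W v ≥ q · (v - v₀)` holds. Hence the supremum defining `W* q` is
attained at `v₀`, with value `q · v₀`.
-/

open MeasureTheory Real

/-- The surplus function `W(v) = E[max_i (v_i + ε_i)]` of an additive random utility model,
where `μ` is the distribution of the random utility shocks `ε`. -/
noncomputable def surplus (N : ℕ) (μ : Measure (Fin N → ℝ)) (v : Fin N → ℝ) : ℝ :=
  ∫ x, (⨆ i : Fin N, (v i + x i)) ∂μ

/-- The choice probability `q_i(v) = P(v_i + ε_i ≥ v_j + ε_j for all j)`. -/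
noncomputable def choiceProb (N : ℕ) (μ : Measure (Fin N → ℝ)) (v : Fin N → ℝ) (i : Fin N) : ℝ :=
  (μ {x | ∀ j, v j + x j ≤ v i + x i}).toReal

/-- `H(y) = ∇(e^W)(log y)`, i.e. `H_i(e^v) = ∂(e^{W(v)})/∂v_i`. -/
noncomputable def genH (N : ℕ) (μ : Measure (Fin N → ℝ)) (y : Fin N → ℝ) (i : Fin N) : ℝ :=
  fderiv ℝ (fun v => Real.exp (surplus N μ v)) (fun j => Real.log (y j)) (Pi.single i 1)

/-- The unit simplex `Δ` in `ℝ^N`. -/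
def unitSimplex (N : ℕ) : Set (Fin N → ℝ) := {q | (∀ i, 0 ≤ q i) ∧ ∑ i, q i = 1}

/-- The relative interior of the unit simplex `Δ` in `ℝ^N`. -/
def unitSimplexRI (N : ℕ) : Set (Fin N → ℝ) := {q | (∀ i, 0 < q i) ∧ ∑ i, q i = 1}

/-- The convex conjugate `W*(q) = sup_{v ∈ ℝ^N} (q·v − W(v))`, valued in `ℝ ∪ {+∞} ⊆ EReal`. -/
noncomputable def surplusConj (N : ℕ) (μ : Measure (Fin N → ℝ)) (q : Fin N → ℝ) : EReal :=
  ⨆ v : Fin N → ℝ, ((∑ i, q i * v i - surplus N μ v : ℝ) : EReal)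

lemma integrable_iSup_add {N : ℕ} [Nonempty (Fin N)] {μ : Measure (Fin N → ℝ)}
    [IsProbabilityMeasure μ] (hint : ∀ i, Integrable (fun x => x i) μ) (v : Fin N → ℝ) :
    Integrable (fun x => ⨆ i : Fin N, (v i + x i)) μ := by
  have hsum : Integrable (fun x => ∑ i : Fin N, |v i + x i|) μ :=
    integrable_finsetSum _ fun i _ => ((integrable_const _).add (hint i)).abs
  refine hsum.mono' ?_ (Filter.Eventually.of_forall fun x => ?_)
  · exact (Measurable.iSup fun i => by fun_prop).aestronglyMeasurable
  · have hle : ∀ i, |v i + x i| ≤ ∑ i : Fin N, |v i + x i| := fun i =>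
      Finset.single_le_sum (f := fun i => |v i + x i|) (fun _ _ => abs_nonneg _)
        (Finset.mem_univ i)
    obtain ⟨i, hi⟩ := exists_eq_ciSup_of_finite (f := fun i : Fin N => v i + x i)
    rw [Real.norm_eq_abs, ← hi]
    exact hle i

lemma surplus_add_const {N : ℕ} [Nonempty (Fin N)] {μ : Measure (Fin N → ℝ)}
    [IsProbabilityMeasure μ] (hint : ∀ i, Integrable (fun x => x i) μ) (v : Fin N → ℝ) (t : ℝ) :
    surplus N μ (fun i => v i + t) = surplus N μ v + t := by
  have h : ∀ x : Fin N → ℝ, (⨆ i : Fin N, (v i + t + x i)) = (⨆ i : Fin N, (v i + x i)) + t := by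
    intro x
    rw [ciSup_add (Set.finite_range _).bddAbove]
    exact iSup_congr fun i => by ring
  simp only [surplus, h]
  rw [integral_add (integrable_iSup_add hint v) (integrable_const _)]
  simp

lemma convexOn_surplus {N : ℕ} [Nonempty (Fin N)] {μ : Measure (Fin N → ℝ)}
    [IsProbabilityMeasure μ] (hint : ∀ i, Integrable (fun x => x i) μ) :
    ConvexOn ℝ Set.univ (surplus N μ) := by
  refine ⟨convex_univ, fun v _ w _ a b ha hb hab => ?_⟩
  simp only [surplus, smul_eq_mul]
  rw [← integral_const_mul, ← integral_const_mul,
    ← integral_add ((integrable_iSup_add hint v).const_mul a)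
      ((integrable_iSup_add hint w).const_mul b)]
  refine integral_mono (integrable_iSup_add hint _)
    (((integrable_iSup_add hint v).const_mul a).add ((integrable_iSup_add hint w).const_mul b))
    fun x => ciSup_le fun i => ?_
  have h1 : v i + x i ≤ ⨆ i : Fin N, (v i + x i) :=
    le_ciSup (f := fun i => v i + x i) (Set.finite_range _).bddAbove i
  have h2 : w i + x i ≤ ⨆ i : Fin N, (w i + x i) :=
    le_ciSup (f := fun i => w i + x i) (Set.finite_range _).bddAbove i
  calc (a • v + b • w) i + x i = a * (v i + x i) + b * (w i + x i) := by
        simp only [Pi.add_apply, Pi.smul_apply, smul_eq_mul]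
        linear_combination (-x i) * hab
    _ ≤ _ := add_le_add (mul_le_mul_of_nonneg_left h1 ha) (mul_le_mul_of_nonneg_left h2 hb)

/-- The tangent-plane inequality for a convex function, obtained from the one-dimensional case by
restriction to the line through the two points. -/
lemma convexOn_tangent_le {E : Type*} [NormedAddCommGroup E] [NormedSpace ℝ E] {f : E → ℝ}
    (hf : ConvexOn ℝ Set.univ f) {L : E →L[ℝ] ℝ} {x : E} (hL : HasFDerivAt f L x) (z : E) :
    f x + L (z - x) ≤ f z := by
  have hc : ConvexOn ℝ Set.univ (f ∘ AffineMap.lineMap (k := ℝ) x z) := by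
    simpa using hf.comp_affineMap (AffineMap.lineMap x z)
  have hd : HasDerivAt (f ∘ AffineMap.lineMap (k := ℝ) x z) (L (z - x)) 0 := by
    refine HasFDerivAt.comp_hasDerivAt (0 : ℝ) ?_ AffineMap.hasDerivAt_lineMap
    simpa using hL
  have h := hc.le_slope_of_hasDerivAt (Set.mem_univ 0) (Set.mem_univ 1) one_pos hd
  simp only [slope_def_field, Function.comp_apply, AffineMap.lineMap_apply_one,
    AffineMap.lineMap_apply_zero, sub_zero, div_one, map_sub] at h
  rw [map_sub]
  linarith

/-- Proposition 1(ii), part 2: if `q ∈ Δ` and `y ∈ (0,∞)^N` satisfies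
`H(y) = q`, then `W*(q) = ∑_i q_i log y_i` (i.e. `W*(q) = q · log S(q)` with `S = H⁻¹`). -/
theorem surplusConj_on_simplex (N : ℕ) (hN : 2 ≤ N) (μ : Measure (Fin N → ℝ))
    (hprob : IsProbabilityMeasure μ) (hac : μ ≪ volume)
    (hsupp : ∀ U : Set (Fin N → ℝ), IsOpen U → U.Nonempty → 0 < μ U)
    (hint : ∀ i, Integrable (fun x => x i) μ)
    (q : Fin N → ℝ) (hq : q ∈ unitSimplex N)
    (y : Fin N → ℝ) (hy : ∀ i, 0 < y i) (hHy : ∀ i, genH N μ y i = q i) :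
    surplusConj N μ q = ((∑ i, q i * Real.log (y i) : ℝ) : EReal) := by
  have : Nonempty (Fin N) := ⟨⟨0, by omega⟩⟩
  set v₀ : Fin N → ℝ := fun j => Real.log (y j) with hv₀
  set F : (Fin N → ℝ) → ℝ := fun v => Real.exp (surplus N μ v) with hF
  set L := fderiv ℝ F v₀ with hLdef
  have hLi : ∀ i, L (Pi.single i 1) = q i := hHy
  have hLv : ∀ d : Fin N → ℝ, L d = ∑ i, q i * d i := by
    intro d
    conv_lhs => rw [pi_eq_sum_univ' d, map_sum]
    refine Finset.sum_congr rfl fun i _ => ?_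
    rw [map_smul, ← hLi i, smul_eq_mul, mul_comm]
  have hL1 : L (fun _ => 1) = 1 := by simpa [hLv] using hq.2
  -- Otherwise `fderiv` would take its default value `0`, contradicting `L 1 = 1`.
  have hdiff : DifferentiableAt ℝ F v₀ := by
    by_contra h
    rw [hLdef, fderiv_zero_of_not_differentiableAt h] at hL1
    simp at hL1
  have hFd : HasFDerivAt F L v₀ := hdiff.hasFDerivAt
  have hF1 : F v₀ = 1 := by
    have hline : HasDerivAt (fun t : ℝ => fun i : Fin N => v₀ i + t) (fun _ => 1) 0 :=
      hasDerivAt_pi.2 fun i => (hasDerivAt_id (0 : ℝ)).const_add _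
    have h1 : HasDerivAt (F ∘ fun t : ℝ => fun i : Fin N => v₀ i + t) (L fun _ => 1) 0 := by
      refine HasFDerivAt.comp_hasDerivAt (0 : ℝ) ?_ hline
      simpa using hFd
    have h2 : (F ∘ fun t : ℝ => fun i : Fin N => v₀ i + t) = fun t => F v₀ * Real.exp t := by
      funext t
      simp only [Function.comp, hF]
      rw [surplus_add_const hint, Real.exp_add]
    have h3 : HasDerivAt (fun t => F v₀ * Real.exp t) (F v₀ * Real.exp 0) 0 :=
      (Real.hasDerivAt_exp 0).const_mul _
    rw [h2] at h1
    have h4 := h1.unique h3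
    rw [hL1, Real.exp_zero, mul_one] at h4
    exact h4.symm
  have hW0 : surplus N μ v₀ = 0 := Real.exp_eq_one_iff _ |>.1 hF1
  have hWd : HasFDerivAt (surplus N μ) L v₀ := by
    have h := hFd.log (by rw [hF1]; exact one_ne_zero)
    rw [hF1, inv_one, one_smul] at h
    simpa [hF] using h
  have key : ∀ v, ∑ i, q i * v i - surplus N μ v ≤ ∑ i, q i * v₀ i := by
    intro v
    have h := convexOn_tangent_le (convexOn_surplus hint) hWd v
    rw [hW0, map_sub, hLv, hLv] at h
    linarith
  refine le_antisymm (iSup_le fun v => EReal.coe_le_coe_iff.2 (key v)) ?_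
  refine le_iSup_of_le v₀ (EReal.coe_le_coe_iff.2 ?_)
  rw [hW0, sub_zero]
end

section
/- The surplus function decomposes according to the chosen option, and the generalized entropy equals a choice-probability-weighted sum of expected shocks: for every v ∈ ℝ^N, writing A_i(v) for the event {v_i + ε_i ≥ v_j + ε_j for all j}, we have W(v) = Σ_{i=1}^N ( q_i(v) v_i + E[ε_i · 1_{A_i(v)}] ); consequently W*(∇W(v)) = −Σ_{i=1}^N E[ε_i · 1_{A_i(v)}] = −Σ_{i=1}^N q_i(v) E[ε_i | A_i(v)]. -/
/-! The events `A_i(v) = {x | ∀ j, v j + x j ≤ v i + x i}` cover `ℝ^N`, since a finite maximum is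
attained, and two of them overlap only in a hyperplane `v i + x i = v j + x j`, which is null for an
absolutely continuous distribution. So every integral splits as a sum over the `A_i(v)`
(`integral_eq_sum_choiceSet`).

For an arbitrary `w`, bounding `max_k (w k + x k)` from below by `w i + x i` on `A_i(v)` gives
`∑ i, (q_i(v) w i + E[ε_i 1_{A_i(v)}]) ≤ W(w)` (`sum_le_surplus`), with equality for `w = v`
because there the bound is exact (`surplus_eq_sum`). Rearranged, this says that
`w ↦ q(v) · w - W(w)` is maximal at `w = v`, with value `-∑ i, E[ε_i 1_{A_i(v)}]`. This value
is therefore the conjugate at `q(v)`; no differentiability of `W` is needed. -/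

open MeasureTheory Real

/-- The event `A_i(v)` that option `i` attains the maximal utility. -/
def choiceSet (N : ℕ) (v : Fin N → ℝ) (i : Fin N) : Set (Fin N → ℝ) :=
  {x | ∀ j, v j + x j ≤ v i + x i}

lemma measurableSet_choiceSet (N : ℕ) (v : Fin N → ℝ) (i : Fin N) :
    MeasurableSet (choiceSet N v i) := by
  have h : choiceSet N v i = ⋂ j, {x | v j + x j ≤ v i + x i} := by
    ext x; simp [choiceSet]
  rw [h]
  exact MeasurableSet.iInter fun j => measurableSet_le (by fun_prop) (by fun_prop)

lemma iUnion_choiceSet (N : ℕ) (hN : 2 ≤ N) (v : Fin N → ℝ) :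
    ⋃ i, choiceSet N v i = Set.univ := by
  have : Nonempty (Fin N) := ⟨⟨0, by omega⟩⟩
  refine Set.eq_univ_of_forall fun x => Set.mem_iUnion.2 ?_
  obtain ⟨i, hi⟩ := Finite.exists_max fun i => v i + x i
  exact ⟨i, hi⟩

/-- Ties between two distinct options occupy an affine hyperplane, hence have Lebesgue
measure zero. -/
lemma volume_tie (N : ℕ) (v : Fin N → ℝ) {i j : Fin N} (hij : i ≠ j) :
    volume {x : Fin N → ℝ | v i + x i = v j + x j} = 0 := by
  let L : (Fin N → ℝ) →ₗ[ℝ] ℝ := LinearMap.proj (R := ℝ) (φ := fun _ => ℝ) i - LinearMap.proj j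
  have hL : LinearMap.ker L ≠ ⊤ := by
    intro h
    have h1 : Pi.single i (1 : ℝ) ∈ LinearMap.ker L := h ▸ Submodule.mem_top
    simp [L, hij.symm] at h1
  -- Translating by `v` turns the tie set into the kernel of `x ↦ x i - x j`.
  have h : {x : Fin N → ℝ | v i + x i = v j + x j}
      = (fun x => v + x) ⁻¹' (LinearMap.ker L : Set (Fin N → ℝ)) := by
    ext x
    simp [L, -map_add, sub_eq_zero]
  rw [h, measure_preimage_add]
  exact Measure.addHaar_submodule _ _ hL

lemma aedisjoint_choiceSet (N : ℕ) (μ : Measure (Fin N → ℝ)) (hac : μ ≪ volume)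
    (v : Fin N → ℝ) : Pairwise (Function.onFun (AEDisjoint μ) (choiceSet N v)) := fun i j hij =>
  measure_mono_null (fun _ hx => le_antisymm (hx.2 i) (hx.1 j)) (hac (volume_tie N v hij))

lemma integral_eq_sum_choiceSet (N : ℕ) (hN : 2 ≤ N) (μ : Measure (Fin N → ℝ))
    (hac : μ ≪ volume) (v : Fin N → ℝ) {f : (Fin N → ℝ) → ℝ} (hf : Integrable f μ) :
    ∫ x, f x ∂μ = ∑ i, ∫ x in choiceSet N v i, f x ∂μ := by
  rw [← setIntegral_univ, ← iUnion_choiceSet N hN v,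
    integral_iUnion_ae (fun i => (measurableSet_choiceSet N v i).nullMeasurableSet)
      (aedisjoint_choiceSet N μ hac v) hf.integrableOn, tsum_fintype]

lemma le_iSup_utility (N : ℕ) (w x : Fin N → ℝ) (i : Fin N) :
    w i + x i ≤ ⨆ k, (w k + x k) :=
  le_ciSup (f := fun k => w k + x k) (Set.finite_range _).bddAbove i

/-- The maximal utility is integrable, being dominated by the sum of the `|w i + x i|`. -/
lemma integrable_iSup (N : ℕ) (hN : 2 ≤ N) (μ : Measure (Fin N → ℝ)) [IsProbabilityMeasure μ]
    (hint : ∀ i, Integrable (fun x => x i) μ) (w : Fin N → ℝ) :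
    Integrable (fun x : Fin N → ℝ => ⨆ i, (w i + x i)) μ := by
  have : Nonempty (Fin N) := ⟨⟨0, by omega⟩⟩
  have hsum : Integrable (fun x : Fin N → ℝ => ∑ i, |w i + x i|) μ :=
    integrable_finsetSum _ fun i _ => ((integrable_const _).add (hint i)).abs
  refine hsum.mono' (Measurable.iSup fun i => by fun_prop).aestronglyMeasurable
    (Filter.Eventually.of_forall fun x => ?_)
  obtain ⟨i, hi⟩ := exists_eq_ciSup_of_finite (f := fun i => w i + x i)
  rw [← hi, Real.norm_eq_abs]
  exact Finset.single_le_sum (f := fun i => |w i + x i|) (fun _ _ => abs_nonneg _)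
    (Finset.mem_univ i)

lemma setIntegral_utility (N : ℕ) (μ : Measure (Fin N → ℝ)) [IsProbabilityMeasure μ]
    (hint : ∀ i, Integrable (fun x => x i) μ) (v w : Fin N → ℝ) (i : Fin N) :
    ∫ x in choiceSet N v i, (w i + x i) ∂μ
      = choiceProb N μ v i * w i + ∫ x in choiceSet N v i, x i ∂μ := by
  rw [integral_add (integrable_const _) (hint i).integrableOn, setIntegral_const, smul_eq_mul]
  rfl

/-- The lower bound for `W(w)` obtained from the suboptimal rule that picks the option best
for `v`. -/
lemma sum_le_surplus (N : ℕ) (hN : 2 ≤ N) (μ : Measure (Fin N → ℝ)) [IsProbabilityMeasure μ]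
    (hac : μ ≪ volume) (hint : ∀ i, Integrable (fun x => x i) μ) (v w : Fin N → ℝ) :
    ∑ i, (choiceProb N μ v i * w i + ∫ x in choiceSet N v i, x i ∂μ) ≤ surplus N μ w := by
  have hI := integrable_iSup N hN μ hint w
  rw [surplus, integral_eq_sum_choiceSet N hN μ hac v hI]
  refine Finset.sum_le_sum fun i _ => ?_
  rw [← setIntegral_utility N μ hint v w i]
  exact setIntegral_mono ((integrable_const _).add (hint i)).integrableOn hI.integrableOn
    fun x => le_iSup_utility N w x i

lemma surplus_eq_sum (N : ℕ) (hN : 2 ≤ N) (μ : Measure (Fin N → ℝ)) [IsProbabilityMeasure μ]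
    (hac : μ ≪ volume) (hint : ∀ i, Integrable (fun x => x i) μ) (v : Fin N → ℝ) :
    surplus N μ v = ∑ i, (choiceProb N μ v i * v i + ∫ x in choiceSet N v i, x i ∂μ) := by
  have : Nonempty (Fin N) := ⟨⟨0, by omega⟩⟩
  rw [surplus, integral_eq_sum_choiceSet N hN μ hac v (integrable_iSup N hN μ hint v)]
  refine Finset.sum_congr rfl fun i _ => ?_
  rw [← setIntegral_utility N μ hint v v i]
  exact setIntegral_congr_fun (measurableSet_choiceSet N v i) fun x hx =>
    le_antisymm (ciSup_le hx) (le_iSup_utility N v x i)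

lemma surplusConj_choiceProb (N : ℕ) (hN : 2 ≤ N) (μ : Measure (Fin N → ℝ))
    [IsProbabilityMeasure μ] (hac : μ ≪ volume) (hint : ∀ i, Integrable (fun x => x i) μ)
    (v : Fin N → ℝ) :
    surplusConj N μ (choiceProb N μ v)
      = ((-∑ i, ∫ x in choiceSet N v i, x i ∂μ : ℝ) : EReal) := by
  refine le_antisymm (iSup_le fun w => ?_) (le_iSup_of_le v ?_)
  · have h := sum_le_surplus N hN μ hac hint v w
    rw [Finset.sum_add_distrib] at h
    exact EReal.coe_le_coe_iff.2 (by linarith)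
  · have h := surplus_eq_sum N hN μ hac hint v
    rw [Finset.sum_add_distrib] at h
    exact EReal.coe_le_coe_iff.2 (by linarith)

/-- writing `A_i(v) = {ε | v_i + ε_i ≥ v_j + ε_j ∀ j}`, the surplus decomposes as
`W(v) = ∑_i (q_i(v) v_i + E[ε_i · 1_{A_i(v)}])`; consequently
`W*(∇W(v)) = −∑_i E[ε_i · 1_{A_i(v)}] = −∑_i q_i(v) E[ε_i | A_i(v)]`
(where `∇W(v) = q(v)` is the vector of choice probabilities). -/
theorem surplus_decomposition (N : ℕ) (hN : 2 ≤ N) (μ : Measure (Fin N → ℝ))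
    (hprob : IsProbabilityMeasure μ) (hac : μ ≪ volume)
    (hsupp : ∀ U : Set (Fin N → ℝ), IsOpen U → U.Nonempty → 0 < μ U)
    (hint : ∀ i, Integrable (fun x => x i) μ) (v : Fin N → ℝ) :
    (surplus N μ v = ∑ i, (choiceProb N μ v i * v i +
        ∫ x in {x : Fin N → ℝ | ∀ j, v j + x j ≤ v i + x i}, x i ∂μ)) ∧
    (surplusConj N μ (choiceProb N μ v) =
        ((-∑ i, ∫ x in {x : Fin N → ℝ | ∀ j, v j + x j ≤ v i + x i}, x i ∂μ : ℝ) : EReal)) ∧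
    (surplusConj N μ (choiceProb N μ v) =
        ((-∑ i, choiceProb N μ v i *
            ((∫ x in {x : Fin N → ℝ | ∀ j, v j + x j ≤ v i + x i}, x i ∂μ) /
              (μ {x : Fin N → ℝ | ∀ j, v j + x j ≤ v i + x i}).toReal) : ℝ) : EReal)) := by
  refine ⟨surplus_eq_sum N hN μ hac hint v, surplusConj_choiceProb N hN μ hac hint v,
    (surplusConj_choiceProb N hN μ hac hint v).trans ?_⟩
  congr 2
  refine Finset.sum_congr rfl fun i _ => ?_
  -- On a null event the integral vanishes, so the junk value of the quotient is harmless.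
  refine (mul_div_cancel_of_imp' fun h0 => ?_).symm
  exact setIntegral_measure_zero _
    (((ENNReal.toReal_eq_zero_iff _).1 h0).resolve_right (measure_ne_top μ _))
end
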